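/- arXiv:1709.04277 — 3 statements merged into one kernel-verified Lean document; each statement's English description precedes it below -/
import Mathlib

section
/- Let c, λ, τ, h_j, h_{j+1}, ζ_j, ξ_j be real numbers with c ≠ 0, c⁴ ≠ λ², h_j > 0, h_{j+1} > 0, and set ζ_{j-1} = ζ_j − (c·h_j + λ·h_j/c)·ξ_j, ζ_{j+1} = ζ_j + (c·h_{j+1} + λ·h_{j+1}/c)·ξ_j, ξ_{j-1} = ξ_j − (c·h_j − λ·h_j/c)·ζ_j, ξ_{j+1} = ξ_j + (c·h_{j+1} − λ·h_{j+1}/c)·ζ_j. If both SUPG discrete equations hold, i.e. (c² − λ)·((h_j/6)·ζ_{j-1} + ((h_j + h_{j+1})/3)·ζ_j + (h_{j+1}/6)·ζ_{j+1}) + τ·c·(−ζ_{j-1}/h_j + (1/h_j + 1/h_{j+1})·ζ_j − ζ_{j+1}/h_{j+1}) − (τ·c² − c + τ·λ)·(ξ_{j-1} − ξ_{j+1})/2 = 0 and (τ·c² − c − τ·λ)·(ζ_{j-1} − ζ_{j+1})/2 − τ·c·(−ξ_{j-1}/h_j + (1/h_j + 1/h_{j+1})·ξ_j − ξ_{j+1}/h_{j+1})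 − (c² + λ)·((h_j/6)·ξ_{j-1} + ((h_j + h_{j+1})/3)·ξ_j + (h_{j+1}/6)·ξ_{j+1}) = 0, then τ·ζ_j + ((h_{j+1} − h_j)/3)·ξ_j = 0 and ((h_{j+1} − h_j)/3)·ζ_j + τ·ξ_j = 0. -/
/-!
The neighbour nodal values lie on straight lines through the values at `r_j`, with the slopes
prescribed by the asymptotic radial Dirac system. Along such data the stiffness term vanishes, and
the first row collapses to `(h_j + h_{j+1})/2 · (c⁴ - λ²)/c` times the left-hand side of the first
limiting equation. Up to sign, the second row is the first one with `λ` replaced by `-λ` and the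
two components exchanged.
-/

namespace SUPG

variable {K : Type*} [Field K]

/-- The mass term `∫ u φ_j` of the piecewise linear `u` with nodal values `uₗ`, `u`, `uᵣ`, where
`φ_j` is the hat function with left step `h` and right step `k`. -/
def massTerm (h k uₗ u uᵣ : K) : K :=
  (h / 6) * uₗ + ((h + k) / 3) * u + (k / 6) * uᵣ

/-- The stiffness term `∫ u' φ_j'` of the piecewise linear `u` with nodal values `uₗ`, `u`, `uᵣ`,
where `φ_j` is the hat function with left step `h` and right step `k`. -/
def stiffnessTerm (h k uₗ u uᵣ : K) : K :=
  -(uₗ / h) + (1 / h + 1 / k) * u - uᵣ / k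

/-- The gradient term `∫ v φ_j'` of the piecewise linear `v` with outer nodal values `vₗ`, `vᵣ`;
neither the middle value nor the mesh steps enter it. -/
def gradientTerm (vₗ vᵣ : K) : K :=
  (vₗ - vᵣ) / 2

/-- The left-hand side of the SUPG equation at a node, for the leading component `u` and the other
component `v`. The equation for `ζ` has `(u, v) = (ζ, ξ)`; the one for `ξ` is the negative of this
with `(u, v) = (ξ, ζ)` and `-lam` in place of `lam`. -/
def supgRow (c lam τ h k uₗ u uᵣ vₗ vᵣ : K) : K :=
  (c ^ 2 - lam) * massTerm h k uₗ u uᵣ + τ * c * stiffnessTerm h k uₗ u uᵣ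
    - (τ * c ^ 2 - c + τ * lam) * gradientTerm vₗ vᵣ

/-- The derivative prescribed by the asymptotic radial Dirac system with `m = 1`:
`ζ' = diracSlope c lam ξ` and `ξ' = diracSlope c (-lam) ζ`. -/
def diracSlope (c lam v : K) : K :=
  (c + lam / c) * v

theorem massTerm_affine [NeZero (2 : K)] [NeZero (3 : K)] (h k u s : K) :
    massTerm h k (u - h * s) u (u + k * s) = (h + k) / 2 * (u + (k - h) / 3 * s) := by
  have two_ne : (2 : K) ≠ 0 := NeZero.ne 2
  have three_ne : (3 : K) ≠ 0 := NeZero.ne 3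
  have six_eq : (6 : K) = 2 * 3 := by norm_num
  rw [massTerm, six_eq]
  field_simp
  ring

theorem stiffnessTerm_affine {h k : K} (hh : h ≠ 0) (hk : k ≠ 0) (u s : K) :
    stiffnessTerm h k (u - h * s) u (u + k * s) = 0 := by
  rw [stiffnessTerm]
  field_simp
  ring

theorem gradientTerm_affine (h k v s : K) :
    gradientTerm (v - h * s) (v + k * s) = -((h + k) / 2 * s) := by
  rw [gradientTerm]
  ring

theorem supgRow_affine [NeZero (2 : K)] [NeZero (3 : K)] {h k : K} (hh : h ≠ 0) (hk : k ≠ 0)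
    (c lam τ u s v t : K) :
    supgRow c lam τ h k (u - h * s) u (u + k * s) (v - h * t) (v + k * t) =
      (h + k) / 2 *
        ((c ^ 2 - lam) * (u + (k - h) / 3 * s) + (τ * c ^ 2 - c + τ * lam) * t) := by
  rw [supgRow, massTerm_affine, stiffnessTerm_affine hh hk, gradientTerm_affine]
  ring

theorem supgRow_dirac [NeZero (2 : K)] [NeZero (3 : K)] {c h k : K} (hc : c ≠ 0) (hh : h ≠ 0)
    (hk : k ≠ 0) (lam τ u v : K) :
    supgRow c lam τ h k
        (u - h * diracSlope c lam v) u (u + k * diracSlope c lam v)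
        (v - h * diracSlope c (-lam) u) (v + k * diracSlope c (-lam) u) =
      (h + k) / 2 * ((c ^ 4 - lam ^ 2) / c) * (τ * u + (k - h) / 3 * v) := by
  have slope_eq : diracSlope c lam v = (c ^ 2 + lam) / c * v := by
    rw [diracSlope]
    field_simp
  have slope_neg_eq : diracSlope c (-lam) u = (c ^ 2 - lam) / c * u := by
    rw [diracSlope]
    field_simp
    ring
  have factor : (c ^ 4 - lam ^ 2) / c = (c ^ 2 - lam) * ((c ^ 2 + lam) / c) := by ring
  have cancel : c * ((c ^ 2 - lam) / c) = c ^ 2 - lam := mul_div_cancel₀ _ hc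
  rw [supgRow_affine hh hk, slope_eq, slope_neg_eq, factor]
  linear_combination -((h + k) / 2 * u) * cancel

theorem supgRow_dirac_eq_zero_iff [NeZero (2 : K)] [NeZero (3 : K)] {c lam h k : K}
    (hc : c ≠ 0) (hclam : c ^ 4 ≠ lam ^ 2) (hh : h ≠ 0) (hk : k ≠ 0) (hhk : h + k ≠ 0)
    (τ u v : K) :
    supgRow c lam τ h k
        (u - h * diracSlope c lam v) u (u + k * diracSlope c lam v)
        (v - h * diracSlope c (-lam) u) (v + k * diracSlope c (-lam) u) = 0 ↔
      τ * u + (k - h) / 3 * v = 0 := by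
  have factor_ne : (h + k) / 2 * ((c ^ 4 - lam ^ 2) / c) ≠ 0 :=
    mul_ne_zero (div_ne_zero hhk (NeZero.ne 2)) (div_ne_zero (sub_ne_zero.mpr hclam) hc)
  rw [supgRow_dirac hc hh hk, mul_eq_zero_iff_left factor_ne]

end SUPG

open SUPG in
theorem supg_system_implies_limiting_system_general
    {K : Type*} [Field K] [NeZero (2 : K)] [NeZero (3 : K)]
    {c lam tau hj hjp1 zj xj : K}
    (hc : c ≠ 0) (hclam : c ^ 4 ≠ lam ^ 2) (hhj : hj ≠ 0) (hhjp1 : hjp1 ≠ 0)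
    (hsum : hj + hjp1 ≠ 0)
    {zjm1 zjp1 xjm1 xjp1 : K}
    (hz1 : zjm1 = zj - (c * hj + lam * hj / c) * xj)
    (hz2 : zjp1 = zj + (c * hjp1 + lam * hjp1 / c) * xj)
    (hx1 : xjm1 = xj - (c * hj - lam * hj / c) * zj)
    (hx2 : xjp1 = xj + (c * hjp1 - lam * hjp1 / c) * zj) :
    ((c ^ 2 - lam) * ((hj / 6) * zjm1 + ((hj + hjp1) / 3) * zj + (hjp1 / 6) * zjp1)
      + tau * c * (-(zjm1 / hj) + (1 / hj + 1 / hjp1) * zj - zjp1 / hjp1)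
      - (tau * c ^ 2 - c + tau * lam) * ((xjm1 - xjp1) / 2) = 0 ∧
    (tau * c ^ 2 - c - tau * lam) * ((zjm1 - zjp1) / 2)
      - tau * c * (-(xjm1 / hj) + (1 / hj + 1 / hjp1) * xj - xjp1 / hjp1)
      - (c ^ 2 + lam) * ((hj / 6) * xjm1 + ((hj + hjp1) / 3) * xj + (hjp1 / 6) * xjp1) = 0) ↔
    tau * zj + ((hjp1 - hj) / 3) * xj = 0 ∧
    ((hjp1 - hj) / 3) * zj + tau * xj = 0 := by
  have slope_mul (h : K) : (c * h + lam * h / c) * xj = h * diracSlope c lam xj := by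
    rw [diracSlope]; ring
  have slope_neg_mul (h : K) : (c * h - lam * h / c) * zj = h * diracSlope c (-lam) zj := by
    rw [diracSlope]; ring
  rw [slope_mul] at hz1 hz2
  rw [slope_neg_mul] at hx1 hx2
  have first_row :=
    supgRow_dirac_eq_zero_iff hc hclam hhj hhjp1 hsum tau zj xj
  have second_row :=
    supgRow_dirac_eq_zero_iff hc (lam := -lam) (by rwa [neg_sq]) hhj hhjp1 hsum tau xj zj
  rw [← hz1, ← hz2, ← hx1, ← hx2] at first_row
  rw [neg_neg, ← hz1, ← hz2, ← hx1, ← hx2, ← neg_eq_zero, add_comm (tau * xj)] at second_row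
  refine and_congr first_row (Iff.trans (Eq.congr_left ?_) second_row)
  simp only [supgRow, massTerm, stiffnessTerm, gradientTerm]
  ring

/-- If both SUPG discrete equations hold at node `r_j` (asymptotic regime, m = 1,
with the neighbor nodal values substituted), then the limiting two-by-two system
for the stability parameter holds. -/
theorem supg_system_implies_limiting_system
    (c lam tau hj hjp1 zj xj : ℝ)
    (hc : c ≠ 0) (hclam : c ^ 4 ≠ lam ^ 2) (hhj : 0 < hj) (hhjp1 : 0 < hjp1)
    (zjm1 zjp1 xjm1 xjp1 : ℝ)
    (hz1 : zjm1 = zj - (c * hj + lam * hj / c) * xj)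
    (hz2 : zjp1 = zj + (c * hjp1 + lam * hjp1 / c) * xj)
    (hx1 : xjm1 = xj - (c * hj - lam * hj / c) * zj)
    (hx2 : xjp1 = xj + (c * hjp1 - lam * hjp1 / c) * zj)
    (heq1 : (c ^ 2 - lam) * ((hj / 6) * zjm1 + ((hj + hjp1) / 3) * zj + (hjp1 / 6) * zjp1)
      + tau * c * (-(zjm1 / hj) + (1 / hj + 1 / hjp1) * zj - zjp1 / hjp1)
      - (tau * c ^ 2 - c + tau * lam) * ((xjm1 - xjp1) / 2) = 0)
    (heq2 : (tau * c ^ 2 - c - tau * lam) * ((zjm1 - zjp1) / 2)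
      - tau * c * (-(xjm1 / hj) + (1 / hj + 1 / hjp1) * xj - xjp1 / hjp1)
      - (c ^ 2 + lam) * ((hj / 6) * xjm1 + ((hj + hjp1) / 3) * xj + (hjp1 / 6) * xjp1) = 0) :
    tau * zj + ((hjp1 - hj) / 3) * xj = 0 ∧
    ((hjp1 - hj) / 3) * zj + tau * xj = 0 :=
  (supg_system_implies_limiting_system_general hc hclam hhj.ne' hhjp1.ne' (add_pos hhj hhjp1).ne'
    hz1 hz2 hx1 hx2).mp ⟨heq1, heq2⟩
end

section
/- Let c, λ, τ, h_j, h_{j+1}, ζ_j, ξ_j be real numbers with c ≠ 0, c⁴ ≠ λ², h_j > 0, h_{j+1} > 0 and (ζ_j, ξ_j) ≠ (0, 0). Set ζ_{j-1} = ζ_j − (c·h_j + λ·h_j/c)·ξ_j, ζ_{j+1} = ζ_j + (c·h_{j+1} + λ·h_{j+1}/c)·ξ_j, ξ_{j-1} = ξ_j − (c·h_j − λ·h_j/c)·ζ_j, ξ_{j+1} = ξ_j + (c·h_{j+1} − λ·h_{j+1}/c)·ζ_j. If both SUPG discrete equations hold at the node r_j, i.e. (c² − λ)·((h_j/6)·ζ_{j-1}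 + ((h_j + h_{j+1})/3)·ζ_j + (h_{j+1}/6)·ζ_{j+1}) + τ·c·(−ζ_{j-1}/h_j + (1/h_j + 1/h_{j+1})·ζ_j − ζ_{j+1}/h_{j+1}) − (τ·c² − c + τ·λ)·(ξ_{j-1} − ξ_{j+1})/2 = 0 and (τ·c² − c − τ·λ)·(ζ_{j-1} − ζ_{j+1})/2 − τ·c·(−ξ_{j-1}/h_j + (1/h_j + 1/h_{j+1})·ξ_j − ξ_{j+1}/h_{j+1}) − (c² + λ)·((h_j/6)·ξ_{j-1} + ((h_j + h_{j+1})/3)·ξ_j + (h_{j+1}/6)·ξ_{j+1}) = 0, then τ = (h_{j+1} − h_j)/3 or τ = −(h_{j+1} − h_j)/3. -/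
/-!
The difference formulas make the nodal values of each component affine across the patch
`[r_{j-1}, r_{j+1}]`, so the stiffness term vanishes: `τ` survives only in the advection term and
competes with `δ = (h_{j+1} - h_j) / 3`, the shift of the centroid of the hat function off its node.
Up to nonzero factors the two equations, which the symmetry `λ ↦ -λ`, `ζ ↔ ξ` exchanges, are
`τ ζ + δ ξ = 0` and `τ ξ + δ ζ = 0`; this system has a nontrivial solution only if its determinant
`τ² - δ²` vanishes.
-/

theorem eq_or_eq_neg_of_symmetric_system {R : Type*} [CommRing R] [NoZeroDivisors R]
    {a b x y : R} (hxy : ¬(x = 0 ∧ y = 0)) (h₁ : a * x + b * y = 0) (h₂ : a * y + b * x = 0) :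
    a = b ∨ a = -b := by
  have hx : (a ^ 2 - b ^ 2) * x = 0 := by linear_combination a * h₁ - b * h₂
  have hy : (a ^ 2 - b ^ 2) * y = 0 := by linear_combination a * h₂ - b * h₁
  have hdet : a ^ 2 - b ^ 2 = 0 := by
    by_contra hne
    exact hxy ⟨(mul_eq_zero.mp hx).resolve_left hne, (mul_eq_zero.mp hy).resolve_left hne⟩
  exact sq_eq_sq_iff_eq_or_eq_neg.mp (sub_eq_zero.mp hdet)

section HatFunctions

variable {K : Type*} [Field K]

/-- The row `∫ u φ_j` of the mass matrix, where `φ_j` is the hat function with mesh steps `h₁` to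
the left and `h₂` to the right of its node, and `u` is piecewise linear with nodal values
`u₀, u₁, u₂` at `r_{j-1}, r_j, r_{j+1}`. -/
def hatMass (h₁ h₂ u₀ u₁ u₂ : K) : K :=
  h₁ / 6 * u₀ + (h₁ + h₂) / 3 * u₁ + h₂ / 6 * u₂

/-- The row `∫ ∂u ∂φ_j` of the stiffness matrix, with the conventions of `hatMass`. -/
def hatStiffness (h₁ h₂ u₀ u₁ u₂ : K) : K :=
  -(u₀ / h₁) + (1 / h₁ + 1 / h₂) * u₁ - u₂ / h₂

/-- The row `∫ u ∂φ_j` of the advection matrix, with the conventions of `hatMass`; the coefficient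
of `u₁` is zero. -/
def hatAdvection (u₀ u₂ : K) : K :=
  (u₀ - u₂) / 2

/-- The left-hand side of the first SUPG equation at the node `r_j`, with `u`, `v` for `ζ`, `ξ`;
negating `lam` and exchanging the components gives the negative of the second one. -/
def supgRow (c lam tau h₁ h₂ u₀ u₁ u₂ v₀ v₂ : K) : K :=
  (c ^ 2 - lam) * hatMass h₁ h₂ u₀ u₁ u₂ + tau * c * hatStiffness h₁ h₂ u₀ u₁ u₂
    - (tau * c ^ 2 - c + tau * lam) * hatAdvection v₀ v₂

theorem hatMass_affine [NeZero (2 : K)] [NeZero (3 : K)] (h₁ h₂ u s : K) :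
    hatMass h₁ h₂ (u - h₁ * s) u (u + h₂ * s) = (h₁ + h₂) / 2 * (u + (h₂ - h₁) / 3 * s) := by
  have h2 : (2 : K) ≠ 0 := two_ne_zero
  have h3 : (3 : K) ≠ 0 := three_ne_zero
  have h6 : (6 : K) = 2 * 3 := by norm_num
  rw [hatMass, h6]
  field_simp
  ring

theorem hatStiffness_affine {h₁ h₂ : K} (hh₁ : h₁ ≠ 0) (hh₂ : h₂ ≠ 0) (u s : K) :
    hatStiffness h₁ h₂ (u - h₁ * s) u (u + h₂ * s) = 0 := by
  rw [hatStiffness]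
  field_simp
  ring

theorem hatAdvection_affine (h₁ h₂ v t : K) :
    hatAdvection (v - h₁ * t) (v + h₂ * t) = -((h₁ + h₂) / 2 * t) := by
  rw [hatAdvection]
  ring

theorem supgRow_affine [NeZero (2 : K)] [NeZero (3 : K)] {h₁ h₂ : K} (hh₁ : h₁ ≠ 0) (hh₂ : h₂ ≠ 0)
    (c lam tau u s v t : K) :
    supgRow c lam tau h₁ h₂ (u - h₁ * s) u (u + h₂ * s) (v - h₁ * t) (v + h₂ * t) =
      (h₁ + h₂) / 2 *
        ((c ^ 2 - lam) * (u + (h₂ - h₁) / 3 * s) + (tau * (c ^ 2 + lam) - c) * t) := by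
  rw [supgRow, hatMass_affine, hatStiffness_affine hh₁ hh₂, hatAdvection_affine]
  ring

theorem supgRow_asymptotic [NeZero (2 : K)] [NeZero (3 : K)] {c lam h₁ h₂ u s v t : K}
    (hc : c ≠ 0) (hh₁ : h₁ ≠ 0) (hh₂ : h₂ ≠ 0)
    (hs : s = (c + lam / c) * v) (ht : t = (c - lam / c) * u) (tau : K) :
    supgRow c lam tau h₁ h₂ (u - h₁ * s) u (u + h₂ * s) (v - h₁ * t) (v + h₂ * t) =
      (h₁ + h₂) / 2 * ((c ^ 4 - lam ^ 2) / c) * (tau * u + (h₂ - h₁) / 3 * v) := by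
  have hs' : s = (c ^ 2 + lam) / c * v := by rw [hs]; field_simp
  have ht' : t = (c ^ 2 - lam) / c * u := by rw [ht]; field_simp
  have hct : c * t = (c ^ 2 - lam) * u := by rw [ht']; field_simp
  calc
    _ = (h₁ + h₂) / 2 * ((c ^ 2 - lam) * ((h₂ - h₁) / 3 * s) + tau * (c ^ 2 + lam) * t) := by
      rw [supgRow_affine hh₁ hh₂]
      linear_combination -((h₁ + h₂) / 2) * hct
    _ = _ := by
      rw [hs', ht']
      ring

theorem supg_stability_parameter_general [NeZero (2 : K)] [NeZero (3 : K)]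
    {c lam tau h₁ h₂ z s x t : K} (hc : c ≠ 0) (hclam : c ^ 4 ≠ lam ^ 2)
    (hh₁ : h₁ ≠ 0) (hh₂ : h₂ ≠ 0) (hsum : h₁ + h₂ ≠ 0) (hnt : ¬(z = 0 ∧ x = 0))
    (hs : s = (c + lam / c) * x) (ht : t = (c - lam / c) * z)
    (hrow₁ : supgRow c lam tau h₁ h₂ (z - h₁ * s) z (z + h₂ * s) (x - h₁ * t) (x + h₂ * t) = 0)
    (hrow₂ : supgRow c (-lam) tau h₁ h₂ (x - h₁ * t) x (x + h₂ * t) (z - h₁ * s) (z + h₂ * s) = 0) :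
    tau = (h₂ - h₁) / 3 ∨ tau = -((h₂ - h₁) / 3) := by
  have hfactor : (h₁ + h₂) / 2 * ((c ^ 4 - lam ^ 2) / c) ≠ 0 :=
    mul_ne_zero (div_ne_zero hsum two_ne_zero) (div_ne_zero (sub_ne_zero.mpr hclam) hc)
  rw [supgRow_asymptotic hc hh₁ hh₂ hs ht] at hrow₁
  rw [supgRow_asymptotic hc hh₁ hh₂ (by rw [ht]; ring) (by rw [hs]; ring), neg_sq] at hrow₂
  exact eq_or_eq_neg_of_symmetric_system hnt ((mul_eq_zero.mp hrow₁).resolve_left hfactor)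
    ((mul_eq_zero.mp hrow₂).resolve_left hfactor)

end HatFunctions

/-- Determination of the SUPG stability parameter: if the two SUPG discrete
equations hold at node `r_j` with a nontrivial nodal pair `(ζ_j, ξ_j)`, then
`τ = ±(h_{j+1} - h_j)/3`. -/
theorem supg_stability_parameter
    (c lam tau hj hjp1 zj xj : ℝ)
    (hc : c ≠ 0) (hclam : c ^ 4 ≠ lam ^ 2) (hhj : 0 < hj) (hhjp1 : 0 < hjp1)
    (hnt : ¬(zj = 0 ∧ xj = 0))
    (zjm1 zjp1 xjm1 xjp1 : ℝ)
    (hz1 : zjm1 = zj - (c * hj + lam * hj / c) * xj)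
    (hz2 : zjp1 = zj + (c * hjp1 + lam * hjp1 / c) * xj)
    (hx1 : xjm1 = xj - (c * hj - lam * hj / c) * zj)
    (hx2 : xjp1 = xj + (c * hjp1 - lam * hjp1 / c) * zj)
    (heq1 : (c ^ 2 - lam) * ((hj / 6) * zjm1 + ((hj + hjp1) / 3) * zj + (hjp1 / 6) * zjp1)
      + tau * c * (-(zjm1 / hj) + (1 / hj + 1 / hjp1) * zj - zjp1 / hjp1)
      - (tau * c ^ 2 - c + tau * lam) * ((xjm1 - xjp1) / 2) = 0)
    (heq2 : (tau * c ^ 2 - c - tau * lam) * ((zjm1 - zjp1) / 2)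
      - tau * c * (-(xjm1 / hj) + (1 / hj + 1 / hjp1) * xj - xjp1 / hjp1)
      - (c ^ 2 + lam) * ((hj / 6) * xjm1 + ((hj + hjp1) / 3) * xj + (hjp1 / 6) * xjp1) = 0) :
    tau = (hjp1 - hj) / 3 ∨ tau = -((hjp1 - hj) / 3) := by
  subst hz1 hz2 hx1 hx2
  refine supg_stability_parameter_general hc hclam hhj.ne' hhjp1.ne' (add_pos hhj hhjp1).ne' hnt
    rfl rfl ?_ ?_ <;> simp only [supgRow, hatMass, hatStiffness, hatAdvection]
  · linear_combination heq1
  · linear_combination -heq2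
end

section
/- Fix real numbers λ, τ, h_j > 0, h_{j+1} > 0, ζ_j, ξ_j, and for each real c ≠ 0 define ζ_{j-1}(c) = ζ_j − (c·h_j + λ·h_j/c)·ξ_j, ζ_{j+1}(c) = ζ_j + (c·h_{j+1} + λ·h_{j+1}/c)·ξ_j, ξ_{j-1}(c) = ξ_j − (c·h_j − λ·h_j/c)·ζ_j, ξ_{j+1}(c) = ξ_j + (c·h_{j+1} − λ·h_{j+1}/c)·ζ_j, and let L(c) = (c² − λ)·((h_j/6)·ζ_{j-1}(c) + ((h_j + h_{j+1})/3)·ζ_j + (h_{j+1}/6)·ζ_{j+1}(c)) + τ·c·(−ζ_{j-1}(c)/h_j + (1/h_j + 1/h_{j+1})·ζ_j − ζ_{j+1}(c)/h_{j+1}) − (τ·c² − c + τ·λ)·(ξ_{j-1}(c) − ξ_{j+1}(c))/2. Then L(c)/(c³·(h_j + h_{j+1})) tends to (τ/2)·ζ_j + ((h_{j+1} − h_j)/6)·ξ_j as c → ∞. -/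
open Filter Topology

/-!
The difference solution makes the three nodal values of `ζ` lie on one line of slope
`(c + λ/c)·ξ_j`, and those of `ξ` on one line of slope `(c - λ/c)·ζ_j`. On collinear nodal values
the stiffness entries cancel, while the mass and convection entries are multiples of
`h_j + h_{j+1}`. After division by `c³ (h_j + h_{j+1})` the row is therefore a polynomial in `c⁻¹`,
and the limit is its constant coefficient.
-/

section CollinearNodalValues

variable {𝕜 : Type*} [Field 𝕜]

/-- The row of the hat-function mass matrix at a node with mesh steps `h` to the left and `k` to
the right, applied to the nodal values `a`, `b`, `d` at the left neighbour, the node and the right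
neighbour. -/
def massRow (h k a b d : 𝕜) : 𝕜 :=
  (h / 6) * a + ((h + k) / 3) * b + (k / 6) * d

/-- The row of the hat-function stiffness matrix, with the conventions of `massRow`. -/
def stiffnessRow (h k a b d : 𝕜) : 𝕜 :=
  -(a / h) + (1 / h + 1 / k) * b - d / k

/-- The row of the hat-function convection matrix with entries `1/2`, `0`, `-1/2`, applied to the
values `a` and `d` at the left and right neighbours. -/
def convectionRow (a d : 𝕜) : 𝕜 :=
  (a - d) / 2

/-- The row of the first SUPG equation for large radius and unit mass, with eigenvalue `lam`,
stability parameter `tau` and speed of light `c`. The nodal values of the first component are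
`zm`, `z`, `zp`; of the second component only the neighbours `xm`, `xp` enter. -/
def supgFirstRow (lam tau c h k zm z zp xm xp : 𝕜) : 𝕜 :=
  (c ^ 2 - lam) * massRow h k zm z zp + tau * c * stiffnessRow h k zm z zp
    - (tau * c ^ 2 - c + tau * lam) * convectionRow xm xp

theorem massRow_of_collinear [CharZero 𝕜] (h k z s : 𝕜) :
    massRow h k (z - h * s) z (z + k * s) = (h + k) * (z / 2 + (k - h) / 6 * s) := by
  unfold massRow
  ring

theorem stiffnessRow_of_collinear {h k : 𝕜} (hh : h ≠ 0) (hk : k ≠ 0) (z s : 𝕜) :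
    stiffnessRow h k (z - h * s) z (z + k * s) = 0 := by
  unfold stiffnessRow
  field_simp
  ring

theorem convectionRow_of_collinear (h k x s : 𝕜) :
    convectionRow (x - h * s) (x + k * s) = -((h + k) * (s / 2)) := by
  unfold convectionRow
  ring

theorem supgFirstRow_of_collinear [CharZero 𝕜] {h k : 𝕜} (hh : h ≠ 0) (hk : k ≠ 0)
    (lam tau c z x s t : 𝕜) :
    supgFirstRow lam tau c h k (z - h * s) z (z + k * s) (x - h * t) (x + k * t) =
      (h + k) * ((c ^ 2 - lam) * (z / 2 + (k - h) / 6 * s)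
        + (tau * c ^ 2 - c + tau * lam) * (t / 2)) := by
  rw [supgFirstRow, massRow_of_collinear, stiffnessRow_of_collinear hh hk,
    convectionRow_of_collinear]
  ring

/-- The first SUPG row on the difference solution, divided by `c ^ 3 * (h + k)` and written as a
polynomial in `u = c⁻¹`. -/
def rescaledFirstRow (lam tau h k z x u : 𝕜) : 𝕜 :=
  (1 - lam * u ^ 2) * (z / 2 * u + (k - h) / 6 * ((1 + lam * u ^ 2) * x))
    + (tau - u + tau * lam * u ^ 2) * ((1 - lam * u ^ 2) * z / 2)

theorem rescaledFirstRow_zero (lam tau h k z x : 𝕜) :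
    rescaledFirstRow lam tau h k z x 0 = (tau / 2) * z + ((k - h) / 6) * x := by
  unfold rescaledFirstRow
  ring

theorem continuous_rescaledFirstRow [TopologicalSpace 𝕜] [IsTopologicalRing 𝕜]
    (lam tau h k z x : 𝕜) : Continuous (rescaledFirstRow lam tau h k z x) := by
  unfold rescaledFirstRow
  simp only [div_eq_mul_inv]
  fun_prop

theorem supgFirstRow_div_eq_rescaledFirstRow [CharZero 𝕜] {h k c : 𝕜} (hh : h ≠ 0) (hk : k ≠ 0)
    (hhk : h + k ≠ 0) (hc : c ≠ 0) (lam tau z x : 𝕜) :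
    supgFirstRow lam tau c h k
        (z - (c * h + lam * h / c) * x) z (z + (c * k + lam * k / c) * x)
        (x - (c * h - lam * h / c) * z) (x + (c * k - lam * k / c) * z) / (c ^ 3 * (h + k)) =
      rescaledFirstRow lam tau h k z x c⁻¹ := by
  have slope_add (l y : 𝕜) : (c * l + lam * l / c) * y = l * ((c + lam / c) * y) := by ring
  have slope_sub (l y : 𝕜) : (c * l - lam * l / c) * y = l * ((c - lam / c) * y) := by ring
  simp only [slope_add, slope_sub]
  rw [supgFirstRow_of_collinear hh hk, mul_comm (c ^ 3), mul_div_mul_left _ _ hhk,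
    rescaledFirstRow]
  field_simp

end CollinearNodalValues

theorem supg_first_row_limit_general {𝕜 : Type*} [NormedField 𝕜] [CharZero 𝕜]
    (lam tau hj hjp1 zj xj : 𝕜) (hhj : hj ≠ 0) (hhjp1 : hjp1 ≠ 0) (hsum : hj + hjp1 ≠ 0)
    (zjm1 zjp1 xjm1 xjp1 : 𝕜 → 𝕜) (L : 𝕜 → 𝕜)
    (hz1 : ∀ c : 𝕜, c ≠ 0 → zjm1 c = zj - (c * hj + lam * hj / c) * xj)
    (hz2 : ∀ c : 𝕜, c ≠ 0 → zjp1 c = zj + (c * hjp1 + lam * hjp1 / c) * xj)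
    (hx1 : ∀ c : 𝕜, c ≠ 0 → xjm1 c = xj - (c * hj - lam * hj / c) * zj)
    (hx2 : ∀ c : 𝕜, c ≠ 0 → xjp1 c = xj + (c * hjp1 - lam * hjp1 / c) * zj)
    (hL : ∀ c : 𝕜, c ≠ 0 →
      L c = supgFirstRow lam tau c hj hjp1 (zjm1 c) zj (zjp1 c) (xjm1 c) (xjp1 c)) :
    Tendsto (fun c : 𝕜 => L c / (c ^ 3 * (hj + hjp1))) (Bornology.cobounded 𝕜)
      (𝓝 ((tau / 2) * zj + ((hjp1 - hj) / 6) * xj)) := by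
  have rescaled_limit : Tendsto (fun c : 𝕜 => rescaledFirstRow lam tau hj hjp1 zj xj c⁻¹)
      (Bornology.cobounded 𝕜) (𝓝 ((tau / 2) * zj + ((hjp1 - hj) / 6) * xj)) := by
    rw [← rescaledFirstRow_zero lam]
    exact ((continuous_rescaledFirstRow lam tau hj hjp1 zj xj).tendsto 0).comp
      tendsto_inv₀_cobounded
  refine rescaled_limit.congr' ?_
  filter_upwards [Bornology.eventually_ne_cobounded (0 : 𝕜)] with c hc
  rw [hL c hc, hz1 c hc, hz2 c hc, hx1 c hc, hx2 c hc,
    supgFirstRow_div_eq_rescaledFirstRow hhj hhjp1 hsum hc]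

/-- The rescaled first SUPG row tends, as the speed of light `c → ∞`, to the
limiting expression `(τ/2)·ζ_j + ((h_{j+1} − h_j)/6)·ξ_j`. -/
theorem supg_first_row_limit
    (lam tau hj hjp1 zj xj : ℝ) (hhj : 0 < hj) (hhjp1 : 0 < hjp1)
    (zjm1 zjp1 xjm1 xjp1 : ℝ → ℝ) (L : ℝ → ℝ)
    (hz1 : ∀ c : ℝ, c ≠ 0 → zjm1 c = zj - (c * hj + lam * hj / c) * xj)
    (hz2 : ∀ c : ℝ, c ≠ 0 → zjp1 c = zj + (c * hjp1 + lam * hjp1 / c) * xj)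
    (hx1 : ∀ c : ℝ, c ≠ 0 → xjm1 c = xj - (c * hj - lam * hj / c) * zj)
    (hx2 : ∀ c : ℝ, c ≠ 0 → xjp1 c = xj + (c * hjp1 - lam * hjp1 / c) * zj)
    (hL : ∀ c : ℝ, c ≠ 0 → L c =
      (c ^ 2 - lam) * ((hj / 6) * zjm1 c + ((hj + hjp1) / 3) * zj + (hjp1 / 6) * zjp1 c)
      + tau * c * (-(zjm1 c / hj) + (1 / hj + 1 / hjp1) * zj - zjp1 c / hjp1)
      - (tau * c ^ 2 - c + tau * lam) * ((xjm1 c - xjp1 c) / 2)) :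
    Tendsto (fun c : ℝ => L c / (c ^ 3 * (hj + hjp1))) atTop
      (𝓝 ((tau / 2) * zj + ((hjp1 - hj) / 6) * xj)) :=
  (supg_first_row_limit_general lam tau hj hjp1 zj xj hhj.ne' hhjp1.ne' (add_pos hhj hhjp1).ne'
    zjm1 zjp1 xjm1 xjp1 L hz1 hz2 hx1 hx2 hL).mono_left IsOrderBornology.atTop_le_cobounded
end
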